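/- (Corollary 6, non-divisibility part) Let n ≥ 2, λ = 1/2, m ∈ {1,…,n}, and L^{(m)} = −(1/16)·(ξ_m∘D − 2E'∘(∂/∂u_m))∘D ∈ W. Then there is no element B ∈ W with L^{(m)} = E'∘B, and there is no element B ∈ W with L^{(m)} = (E'+1)∘B. Consequently, the ℂ-linear map ψ ↦ C^{1/2}_2(ξ_m, ψ) = (E'(E'+1))^{−1}(L^{(m)}ψ) is not an element of W, i.e., it is not a differential operator with polynomial coefficients. -/

import Mathlib

open MvPolynomial

/-- The polynomial symbol algebra `A = ℂ[u₁,…,uₙ,ξ₁,…,ξₙ]`: variables `Sum.inl i` are the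
`uᵢ` and variables `Sum.inr i` are the `ξᵢ`. -/
abbrev PolA (n : ℕ) := MvPolynomial (Fin n ⊕ Fin n) ℂ

namespace LO

/-- ξ-degree of a monomial exponent. -/
def xiDeg {n : ℕ} (d : (Fin n ⊕ Fin n) →₀ ℕ) : ℕ :=
  ∑ i : Fin n, d (Sum.inr i)

/-- `c(E)`: the operator multiplying the ξ-degree-`m` component by `c m`. -/
noncomputable def cE {n : ℕ} (c : ℕ → ℂ) (φ : PolA n) : PolA n :=
  ∑ d ∈ φ.support, monomial d (c (xiDeg d) * coeff d φ)

/-- `D = Σᵢ ∂²/∂uᵢ∂ξᵢ`. -/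
noncomputable def Dop {n : ℕ} (φ : PolA n) : PolA n :=
  ∑ i : Fin n, pderiv (Sum.inl i) (pderiv (Sum.inr i) φ)

/-- The scalar `h^λ_d(m)`. -/
noncomputable def hScal (n : ℕ) (lam : ℂ) (d m : ℕ) : ℂ :=
  (d.factorial : ℂ)⁻¹ *
    ∏ j ∈ Finset.range d,
      ((m : ℂ) + (j : ℂ) + lam * ((n : ℂ) + 1)) /
        (2 * (m : ℂ) + (j : ℂ) + (n : ℂ) + (d : ℂ))

/-- The scalar `g^λ_d(m)`. -/
noncomputable def gScal (n : ℕ) (lam : ℂ) (d m : ℕ) : ℂ :=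
  (d.factorial : ℂ)⁻¹ *
    ∏ j ∈ Finset.range d,
      (-(m : ℂ) - (j : ℂ) - lam * ((n : ℂ) + 1)) /
        (2 * (m : ℂ) + (j : ℂ) + (n : ℂ) + 1)

/-- `bh^λ_d = h^λ_d(E) ∘ D^d` (equal to the identity for `d = 0`). -/
noncomputable def bh {n : ℕ} (lam : ℂ) (d : ℕ) (φ : PolA n) : PolA n :=
  cE (hScal n lam d) (Dop^[d] φ)

/-- `bg^λ_d = g^λ_d(E) ∘ D^d` (equal to the identity for `d = 0`). -/
noncomputable def bg {n : ℕ} (lam : ℂ) (d : ℕ) (φ : PolA n) : PolA n :=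
  cE (gScal n lam d) (Dop^[d] φ)

/-- `N_k(φ,ψ) = (1/k!) Σ_{α ∈ {1,…,n}^k} ∂^kφ/∂ξ_α · ∂^kψ/∂u_α`. -/
noncomputable def Nop {n : ℕ} (k : ℕ) (φ ψ : PolA n) : PolA n :=
  (k.factorial : ℂ)⁻¹ •
    ∑ α : Fin k → Fin n,
      ((List.ofFn α).foldr (fun i acc => pderiv (Sum.inr i) acc) φ) *
      ((List.ofFn α).foldr (fun i acc => pderiv (Sum.inl i) acc) ψ)

/-- The coefficient `C^λ_p` of the Lecomte–Ovsienko star product. -/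
noncomputable def C (n : ℕ) (lam : ℂ) (p : ℕ) (φ ψ : PolA n) : PolA n :=
  ∑ i ∈ Finset.range (p + 1), ∑ j ∈ Finset.range (p + 1),
    ∑ k ∈ Finset.range (p + 1), ∑ m ∈ Finset.range (p + 1),
      if i + j + k + m = p then bg lam m (Nop k (bh lam i φ) (bh lam j ψ)) else 0

/-- The Poisson bracket `{φ,ψ}`. -/
noncomputable def pb {n : ℕ} (φ ψ : PolA n) : PolA n :=
  ∑ i : Fin n,
    (pderiv (Sum.inr i) φ * pderiv (Sum.inl i) ψ
      - pderiv (Sum.inl i) φ * pderiv (Sum.inr i) ψ)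

/-- `φ ∈ A^m` (ξ-homogeneous of degree `m`; for `m < 0` this forces `φ = 0`). -/
def IsXiHomog {n : ℕ} (m : ℤ) (φ : PolA n) : Prop :=
  ∀ d ∈ φ.support, (xiDeg d : ℤ) = m

/-- The set of spanning momentum functions of the projective `sl_{n+1}(ℝ)`-action. -/
noncomputable def momSet (n : ℕ) : Set (PolA n) :=
  (Set.range fun i : Fin n => (X (Sum.inr i) : PolA n)) ∪
  (Set.range fun ij : Fin n × Fin n =>
    (X (Sum.inl ij.1) * X (Sum.inr ij.2) : PolA n)) ∪
  (Set.range fun i : Fin n =>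
    (X (Sum.inl i) * ∑ k : Fin n, X (Sum.inl k) * X (Sum.inr k) : PolA n))

/-- The span `M` of the momentum functions. -/
noncomputable def momSpan (n : ℕ) : Submodule ℂ (PolA n) := Submodule.span ℂ (momSet n)

/-- The Weyl algebra `W` of differential operators with polynomial coefficients,
as a subalgebra of `End_ℂ(A)`. -/
noncomputable def Weyl (n : ℕ) : Subalgebra ℂ (Module.End ℂ (PolA n)) :=
  Algebra.adjoin ℂ
    ((Set.range fun i : Fin n =>
        (LinearMap.mulLeft ℂ (X (Sum.inl i)) : Module.End ℂ (PolA n))) ∪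
     (Set.range fun i : Fin n =>
        (LinearMap.mulLeft ℂ (X (Sum.inr i)) : Module.End ℂ (PolA n))) ∪
     (Set.range fun v : Fin n ⊕ Fin n =>
        ((pderiv v).toLinearMap : Module.End ℂ (PolA n))))

/-- A bilinear map `B : A × A → A` is bidifferential if it is a finite sum
`B(φ,ψ) = Σ_α A_α(φ)·B_α(ψ)` with `A_α, B_α` in the Weyl algebra. -/
def Bidiff (n : ℕ) (B : PolA n → PolA n → PolA n) : Prop :=
  ∃ (N : ℕ) (Aop Bop : Fin N → Weyl n),
    ∀ φ ψ : PolA n,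
      B φ ψ = ∑ α : Fin N,
        (Aop α : Module.End ℂ (PolA n)) φ * (Bop α : Module.End ℂ (PolA n)) ψ

/-- The scalar by which `T_p = ∏_{i=1}^{⌊p/2⌋}(E'+i)` acts on `A^m`. -/
noncomputable def TScal (n p m : ℕ) : ℂ :=
  ∏ i ∈ Finset.Icc 1 (p / 2), ((m : ℂ) + (n : ℂ) / 2 + (i : ℂ))

/-- The scalar by which `S_p = ∏_{i=1}^{⌊p/2⌋}(E'−i)` acts on `A^m`. -/
noncomputable def SScal (n p m : ℕ) : ℂ :=
  ∏ i ∈ Finset.Icc 1 (p / 2), ((m : ℂ) + (n : ℂ) / 2 - (i : ℂ))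

/-- The operator `T_p`. -/
noncomputable def Tp (n p : ℕ) : PolA n → PolA n := cE (TScal n p)

/-- The operator `S_p`. -/
noncomputable def Sp (n p : ℕ) : PolA n → PolA n := cE (SScal n p)

/-- The fiberwise Euler operator `E = Σ ξᵢ ∂/∂ξᵢ` as an endomorphism. -/
noncomputable def Elin (n : ℕ) : Module.End ℂ (PolA n) :=
  ∑ i : Fin n,
    (LinearMap.mulLeft ℂ (X (Sum.inr i)) : Module.End ℂ (PolA n)) ∘ₗ
      (pderiv (Sum.inr i)).toLinearMap

/-- `E' = E + n/2` as an endomorphism. -/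
noncomputable def E'lin (n : ℕ) : Module.End ℂ (PolA n) :=
  Elin n + ((n : ℂ) / 2) • 1

/-- `D` as an endomorphism. -/
noncomputable def Dlin (n : ℕ) : Module.End ℂ (PolA n) :=
  ∑ i : Fin n,
    ((pderiv (Sum.inl i)).toLinearMap : Module.End ℂ (PolA n)) ∘ₗ
      (pderiv (Sum.inr i)).toLinearMap

/-- `L^{(m)} = −(1/16)(ξ_m∘D − 2E'∘∂/∂u_m)∘D`. -/
noncomputable def Lop (n : ℕ) (m : Fin n) : Module.End ℂ (PolA n) :=
  (-(1 / 16 : ℂ)) •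
    (((LinearMap.mulLeft ℂ (X (Sum.inr m)) : Module.End ℂ (PolA n)) ∘ₗ Dlin n
        - (2 : ℂ) • (E'lin n ∘ₗ (pderiv (Sum.inl m)).toLinearMap)) ∘ₗ Dlin n)

end LO


namespace LO

/-- sequences in `A` depending polynomially on `k` -/
noncomputable def polySeq (n : ℕ) : Submodule ℂ (ℕ → PolA n) :=
  Submodule.span ℂ (Set.range fun p : ℕ × PolA n => fun k : ℕ => ((k : ℂ) ^ p.1) • p.2)

theorem polySeq_map {n : ℕ} (L : PolA n →ₗ[ℂ] PolA n) {G : ℕ → PolA n} (hG : G ∈ polySeq n) :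
    (fun k => L (G k)) ∈ polySeq n := by
  induction hG using Submodule.span_induction with
  | mem x hx =>
    obtain ⟨p, rfl⟩ := hx
    apply Submodule.subset_span
    exact ⟨(p.1, L p.2), by funext k; simp⟩
  | zero => simp only [Pi.zero_apply, map_zero, smul_zero]; exact (polySeq n).zero_mem
  | add x y _ _ hx hy =>
    simp only [Pi.add_apply, map_add, smul_add]; exact (polySeq n).add_mem hx hy
  | smul a x _ hx =>
    simp only [Pi.smul_apply, map_smul]; exact (polySeq n).smul_mem a hx

theorem polySeq_natMul {n : ℕ} {G : ℕ → PolA n} (hG : G ∈ polySeq n) :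
    (fun k : ℕ => (k : ℂ) • (G k)) ∈ polySeq n := by
  induction hG using Submodule.span_induction with
  | mem x hx =>
    obtain ⟨p, rfl⟩ := hx
    apply Submodule.subset_span
    exact ⟨(p.1 + 1, p.2), by funext k; simp [pow_succ', smul_smul]⟩
  | zero => simp only [Pi.zero_apply, map_zero, smul_zero]; exact (polySeq n).zero_mem
  | add x y _ _ hx hy =>
    simp only [Pi.add_apply, map_add, smul_add]; exact (polySeq n).add_mem hx hy
  | smul a x _ hx =>
    convert (polySeq n).smul_mem a hx using 1
    funext k
    simp [smul_comm a]

theorem polySeq_coeff {n : ℕ} {G : ℕ → PolA n} (hG : G ∈ polySeq n) (d : (Fin n ⊕ Fin n) →₀ ℕ) :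
    ∃ q : Polynomial ℂ, ∀ k : ℕ, coeff d (G k) = q.eval (k : ℂ) := by
  induction hG using Submodule.span_induction with
  | mem x hx =>
    obtain ⟨p, rfl⟩ := hx
    exact ⟨Polynomial.C (coeff d p.2) * Polynomial.X ^ p.1, fun k => by
      simp only [coeff_smul, smul_eq_mul, Polynomial.eval_mul, Polynomial.eval_C,
        Polynomial.eval_pow, Polynomial.eval_X]
      ring⟩
  | zero => exact ⟨0, by simp⟩
  | add x y _ _ hx hy =>
    obtain ⟨p, hp⟩ := hx
    obtain ⟨q, hq⟩ := hy
    exact ⟨p + q, fun k => by simp [hp, hq]⟩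
  | smul a x _ hx =>
    obtain ⟨p, hp⟩ := hx
    exact ⟨Polynomial.C a * p, fun k => by simp [hp]⟩

/-- sequences of the form `w^(k-N) G_k` with `G` polynomial in `k` -/
def Good (n : ℕ) (w : Fin n ⊕ Fin n) (F : ℕ → PolA n) : Prop :=
  ∃ N : ℕ, ∃ G ∈ polySeq n, ∀ k, X w ^ N * F k = X w ^ k * G k

theorem Good.shift {n : ℕ} {w : Fin n ⊕ Fin n} {F : ℕ → PolA n} {N : ℕ} {G : ℕ → PolA n}
    (hG : G ∈ polySeq n) (h : ∀ k, X w ^ N * F k = X w ^ k * G k) (M : ℕ) :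
    ∃ G' ∈ polySeq n, ∀ k, X w ^ (M + N) * F k = X w ^ k * G' k := by
  refine ⟨_, polySeq_map (LinearMap.mulLeft ℂ (X w ^ M)) hG, fun k => ?_⟩
  rw [pow_add, mul_assoc, h, LinearMap.mulLeft_apply]
  ring

theorem Good.add {n : ℕ} {w : Fin n ⊕ Fin n} {F F' : ℕ → PolA n}
    (h : Good n w F) (h' : Good n w F') : Good n w (fun k => F k + F' k) := by
  obtain ⟨N, G, hG, e⟩ := h
  obtain ⟨N', G', hG', e'⟩ := h'
  obtain ⟨H, hH, f⟩ := Good.shift hG e N'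
  obtain ⟨H', hH', f'⟩ := Good.shift hG' e' N
  refine ⟨N + N', _, (polySeq n).add_mem hH hH', fun k => ?_⟩
  rw [mul_add, f', add_comm N N', f, Pi.add_apply]
  ring

theorem Good.mulLeft {n : ℕ} {w : Fin n ⊕ Fin n} {F : ℕ → PolA n}
    (h : Good n w F) (a : PolA n) : Good n w (fun k => a * F k) := by
  obtain ⟨N, G, hG, e⟩ := h
  refine ⟨N, _, polySeq_map (LinearMap.mulLeft ℂ a) hG, fun k => ?_⟩
  rw [mul_left_comm, e, LinearMap.mulLeft_apply]
  ring

theorem pderiv_X_pow_mul {n : ℕ} (v w : Fin n ⊕ Fin n) (N : ℕ) (f : PolA n) :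
    X w * pderiv v (X w ^ N * f) =
      X w ^ N * (X w * pderiv v f + (N : PolA n) * pderiv v (X w) * f) := by
  rw [Derivation.leibniz, Derivation.leibniz_pow]
  rcases N with _ | N
  · simp
  · simp only [smul_eq_mul, nsmul_eq_mul, Nat.add_sub_cancel]
    ring

theorem Good.pderiv {n : ℕ} {w : Fin n ⊕ Fin n} {F : ℕ → PolA n}
    (h : Good n w F) (v : Fin n ⊕ Fin n) : Good n w (fun k => MvPolynomial.pderiv v (F k)) := by
  obtain ⟨N, G, hG, e⟩ := h
  have h1 := polySeq_map (LinearMap.mulLeft ℂ (X w) ∘ₗ (MvPolynomial.pderiv v).toLinearMap) hG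
  have h2 := polySeq_map (LinearMap.mulLeft ℂ (MvPolynomial.pderiv v (X w))) (polySeq_natMul hG)
  have h3 := polySeq_map (LinearMap.mulLeft ℂ ((N : PolA n) * MvPolynomial.pderiv v (X w))) hG
  refine ⟨N + 1, _, (polySeq n).sub_mem ((polySeq n).add_mem h1 h2) h3, fun k => ?_⟩
  have e1 := pderiv_X_pow_mul v w N (F k)
  have e2 := pderiv_X_pow_mul v w k (G k)
  rw [e k, e2] at e1
  have hk : (k : ℂ) • G k = (k : PolA n) * G k := by
    rw [smul_eq_C_mul]; simp
  simp only [Pi.sub_apply, Pi.add_apply, LinearMap.comp_apply, LinearMap.mulLeft_apply, hk,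
    Derivation.coeFn_coe]
  linear_combination (-1 : PolA n) * e1 + (-(N : PolA n) * MvPolynomial.pderiv v (X w)) * e k

theorem Good.weyl {n : ℕ} {w : Fin n ⊕ Fin n} {B : Module.End ℂ (PolA n)} (hB : B ∈ Weyl n) :
    ∀ F : ℕ → PolA n, Good n w F → Good n w (fun k => B (F k)) := by
  unfold Weyl at hB
  induction hB using Algebra.adjoin_induction with
  | mem x hx =>
    intro F hF
    rcases hx with (⟨i, rfl⟩ | ⟨i, rfl⟩) | ⟨v, rfl⟩
    · exact hF.mulLeft _
    · exact hF.mulLeft _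
    · exact hF.pderiv v
  | algebraMap r =>
    intro F hF
    have := hF.mulLeft (MvPolynomial.C r)
    simpa [Algebra.algebraMap_eq_smul_one, smul_eq_C_mul] using this
  | add x y _ _ hx hy => exact fun F hF => (hx F hF).add (hy F hF)
  | mul x y _ _ hx hy => exact fun F hF => hx _ (hy F hF)

/-- `c u_j^a ξ_j^b ξ_m^k` -/
noncomputable def T {n : ℕ} (j m : Fin n) (a b k : ℕ) (c : ℂ) : PolA n :=
  MvPolynomial.C c * X (Sum.inl j) ^ a * X (Sum.inr j) ^ b * X (Sum.inr m) ^ k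

theorem T_eq {n : ℕ} (j m : Fin n) (a b k : ℕ) (c : ℂ) :
    T j m a b k c = monomial (Finsupp.single (Sum.inl j) a + Finsupp.single (Sum.inr j) b
      + Finsupp.single (Sum.inr m) k) c := by
  simp [T, X_pow_eq_monomial, C_mul_monomial, monomial_mul]

theorem weyl_coeff {n : ℕ} (j m : Fin n) {B : Module.End ℂ (PolA n)} (hB : B ∈ Weyl n) :
    ∃ q : Polynomial ℂ, ∀ k : ℕ,
      coeff (Finsupp.single (Sum.inr m) (k + 1)) (B (T j m 2 2 k 1)) = q.eval (k : ℂ) := by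
  have h0 : Good n (Sum.inr m) (fun k => T j m 2 2 k 1) := by
    refine ⟨0, fun _ => X (Sum.inl j) ^ 2 * X (Sum.inr j) ^ 2, ?_, fun k => ?_⟩
    · exact Submodule.subset_span ⟨(0, X (Sum.inl j) ^ 2 * X (Sum.inr j) ^ 2), by funext k; simp⟩
    · simp only [T, C_1]; ring
  obtain ⟨N, G, hG, e⟩ := Good.weyl hB _ h0
  obtain ⟨q, hq⟩ := polySeq_coeff hG (Finsupp.single (Sum.inr m) (N + 1))
  refine ⟨q, fun k => ?_⟩
  have := congrArg (coeff (Finsupp.single (Sum.inr m) (N + k + 1))) (e k)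
  rw [← hq]
  rw [X_pow_eq_monomial, X_pow_eq_monomial] at this
  rw [show Finsupp.single (Sum.inr m : Fin n ⊕ Fin n) (N + k + 1)
      = Finsupp.single (Sum.inr m) N + Finsupp.single (Sum.inr m) (k + 1) by
        rw [← Finsupp.single_add, add_assoc], coeff_monomial_mul,
     ← Finsupp.single_add (Sum.inr m : Fin n ⊕ Fin n) N (k + 1), show N + (k + 1) = k + (N + 1) by ring,
     Finsupp.single_add (Sum.inr m : Fin n ⊕ Fin n) k (N + 1), coeff_monomial_mul] at this
  simpa only [one_mul] using this

theorem X_mul_T {n : ℕ} (j m : Fin n) (a b k : ℕ) (c : ℂ) :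
    X (Sum.inr m) * T j m a b k c = T j m a b (k + 1) c := by
  simp only [T]; ring

theorem xiDeg_T {n : ℕ} (j m : Fin n) (a b k : ℕ) :
    xiDeg (Finsupp.single (Sum.inl j) a + Finsupp.single (Sum.inr j) b
      + Finsupp.single (Sum.inr m) k) = b + k := by
  simp [xiDeg, Finset.sum_add_distrib, Finsupp.single_apply]

theorem cE_monomial {n : ℕ} (f : ℕ → ℂ) (d : (Fin n ⊕ Fin n) →₀ ℕ) (c : ℂ) :
    cE f (monomial d c) = monomial d (f (xiDeg d) * c) := by
  classical
  by_cases hc : c = 0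
  · simp [hc, cE]
  · simp [cE, support_monomial, hc]

theorem cE_T {n : ℕ} (f : ℕ → ℂ) (j m : Fin n) (a b k : ℕ) (c : ℂ) :
    cE f (T j m a b k c) = T j m a b k (f (b + k) * c) := by
  rw [T_eq, cE_monomial, xiDeg_T, T_eq]

theorem pderiv_T {n : ℕ} {j i : Fin n} (m : Fin n) (h : i ≠ j) (a b k : ℕ) (c : ℂ) :
    pderiv (Sum.inl i) (T j m a b k c) = 0 := by
  simp [T, Derivation.leibniz, Derivation.leibniz_pow, pderiv_X, h.symm]

theorem pderiv_comm' {n : ℕ} (v w : Fin n ⊕ Fin n) (f : PolA n) :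
    pderiv v (pderiv w f) = pderiv w (pderiv v f) := by
  have h : ⁅(pderiv v : Derivation ℂ (PolA n) (PolA n)),
      (pderiv w : Derivation ℂ (PolA n) (PolA n))⁆ = 0 := by
    apply MvPolynomial.derivation_ext
    intro i
    simp [Derivation.commutator_apply, pderiv_X, Pi.single_apply, apply_ite]
  have := congrArg (fun D : Derivation ℂ (PolA n) (PolA n) => D f) h
  simpa [Derivation.commutator_apply, sub_eq_zero] using this

theorem Dop_T {n : ℕ} {j m : Fin n} (h : m ≠ j) (a b k : ℕ) (c : ℂ) :
    Dop (T j m (a + 1) (b + 1) k c) = T j m a b k ((a + 1) * (b + 1) * c) := by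
  rw [Dop, Finset.sum_eq_single j]
  · simp [T, Derivation.leibniz, Derivation.leibniz_pow, pderiv_X, h]
    ring
  · intro i _ hi
    rw [pderiv_comm', pderiv_T m hi, map_zero]
  · simp

theorem Dlin_apply {n : ℕ} (f : PolA n) : Dlin n f = Dop f := by
  simp [Dlin, Dop]

theorem T_add {n : ℕ} (j m : Fin n) (a b k : ℕ) (c c' : ℂ) :
    T j m a b k c + T j m a b k c' = T j m a b k (c + c') := by
  simp only [T, C_add]; ring

theorem coeff_T {n : ℕ} (j m : Fin n) (k : ℕ) (c : ℂ) :
    coeff (Finsupp.single (Sum.inr m) k) (T j m 0 0 k c) = c := by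
  rw [T_eq]; simp

theorem Lop_T {n : ℕ} {j m : Fin n} (h : m ≠ j) (k : ℕ) :
    Lop n m (T j m 2 2 k 1) = T j m 0 0 (k + 1) (-(1 / 4)) := by
  simp only [Lop, LinearMap.smul_apply, LinearMap.comp_apply, LinearMap.sub_apply, Dlin_apply,
    LinearMap.mulLeft_apply, Derivation.coeFn_coe]
  rw [Dop_T h 1 1, Dop_T h 0 0, pderiv_T m h, map_zero, smul_zero, sub_zero, X_mul_T,
    smul_eq_C_mul]
  simp only [T, ← mul_assoc, ← C_mul]
  norm_num

theorem coeff_X_mul_pderiv {n : ℕ} (v : Fin n ⊕ Fin n) (d : (Fin n ⊕ Fin n) →₀ ℕ) (f : PolA n) :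
    coeff d (X v * pderiv v f) = d v * coeff d f := by
  classical
  induction f using MvPolynomial.induction_on' with
  | monomial s a =>
    rw [pderiv_monomial, X, monomial_mul, coeff_monomial, coeff_monomial]
    by_cases hs : s v = 0
    · by_cases hd : s = d
      · subst hd; simp [hs]
      · simp [hs, hd]
    · have : Finsupp.single v 1 + (s - Finsupp.single v 1) = s := by
        ext x
        by_cases hx : v = x
        · subst hx; simp; omega
        · simp [Finsupp.single_apply, hx]
      rw [this]
      by_cases hd : s = d
      · subst hd; simp [mul_comm]
      · simp [hd]
  | add p q hp hq => simp [mul_add, hp, hq]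

theorem coeff_E' {n : ℕ} (m : Fin n) (k : ℕ) (f : PolA n) :
    coeff (Finsupp.single (Sum.inr m) k) (E'lin n f)
      = (k + n / 2) * coeff (Finsupp.single (Sum.inr m) k) f := by
  simp only [E'lin, Elin, LinearMap.add_apply, LinearMap.sum_apply, LinearMap.comp_apply,
    LinearMap.mulLeft_apply, Derivation.coeFn_coe, coeff_add, coeff_sum, coeff_X_mul_pderiv,
    LinearMap.smul_apply, Module.End.one_apply, coeff_smul, smul_eq_mul]
  rw [Finset.sum_eq_single m]
  · simp; ring
  · intro i _ hi
    simp [Finsupp.single_apply, hi.symm]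
  · simp

theorem no_poly (q p : Polynomial ℂ) (z c : ℂ) (hz : p.eval z = 0) (hc : c ≠ 0)
    (h : ∀ k : ℕ, p.eval (k : ℂ) * q.eval (k : ℂ) = c) : False := by
  have : p * q = Polynomial.C c := by
    apply Polynomial.eq_of_infinite_eval_eq
    apply Set.Infinite.mono (s := Set.range fun k : ℕ => (k : ℂ))
    · rintro _ ⟨k, rfl⟩
      simp [h]
    · exact Set.infinite_range_of_injective Nat.cast_injective
  have := congrArg (Polynomial.eval z) this
  simp [hz] at this
  exact hc this.symm

theorem Nop_zero {n : ℕ} (φ ψ : PolA n) : Nop 0 φ ψ = φ * ψ := by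
  simp [Nop]

theorem Nop_one {n : ℕ} (m : Fin n) (ψ : PolA n) :
    Nop 1 (X (Sum.inr m)) ψ = pderiv (Sum.inl m) ψ := by
  simp only [Nop, Nat.factorial_one, Nat.cast_one, inv_one, one_smul]
  rw [Finset.sum_eq_single (fun _ => m)]
  · simp
  · intro b _ hb
    have : b 0 ≠ m := fun h => hb (by funext x; rw [Subsingleton.elim x 0, h])
    simp [pderiv_X, this.symm]
  · simp

theorem Nop_two {n : ℕ} (m : Fin n) (ψ : PolA n) :
    Nop 2 (X (Sum.inr m)) ψ = 0 := by
  simp only [Nop]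
  rw [Finset.sum_eq_zero, smul_zero]
  intro α _
  simp [List.ofFn_succ, pderiv_X, Pi.single_apply, apply_ite]

theorem cE_zero {n : ℕ} (f : ℕ → ℂ) : cE f (0 : PolA n) = 0 := by simp [cE]

theorem Dop_zero {n : ℕ} : Dop (0 : PolA n) = 0 := by simp [Dop]

theorem Dop_X {n : ℕ} (m : Fin n) : Dop (X (Sum.inr m) : PolA n) = 0 := by
  simp [Dop, pderiv_X, Pi.single_apply, apply_ite]

theorem cE_one {n : ℕ} (f : ℕ → ℂ) (hf : ∀ k, f k = 1) (φ : PolA n) : cE f φ = φ := by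
  simp only [cE, hf, one_mul]
  exact φ.support_sum_monomial_coeff

theorem bh_zero {n : ℕ} (lam : ℂ) (φ : PolA n) : bh lam 0 φ = φ :=
  cE_one _ (fun k => by simp [hScal]) _

theorem bg_zero {n : ℕ} (lam : ℂ) (φ : PolA n) : bg lam 0 φ = φ :=
  cE_one _ (fun k => by simp [gScal]) _

theorem C_T {n : ℕ} {j m : Fin n} (h : m ≠ j) (k : ℕ) :
    LO.C n (1 / 2) 2 (X (Sum.inr m)) (T j m 2 2 k 1)
      = T j m 0 0 (k + 1) (4 * (hScal n (1 / 2) 2 k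
        + hScal n (1 / 2) 1 (k + 1) * gScal n (1 / 2) 1 (k + 1) + gScal n (1 / 2) 2 (k + 1))) := by
  have b1 : bh (1 / 2) 1 (X (Sum.inr m) : PolA n) = 0 := by simp [bh, Dop_X, cE_zero]
  have b2 : bh (1 / 2) 2 (X (Sum.inr m) : PolA n) = 0 := by simp [bh, Dop_X, Dop_zero, cE_zero]
  have c1 : bh (1 / 2) 1 (T j m 2 2 k 1) = T j m 1 1 k (hScal n (1 / 2) 1 (1 + k) * 4) := by
    simp only [bh, Function.iterate_one]
    rw [Dop_T h 1 1, cE_T]; norm_num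
  have c2 : bh (1 / 2) 2 (T j m 2 2 k 1) = T j m 0 0 k (hScal n (1 / 2) 2 (0 + k) * 4) := by
    simp only [bh, Function.iterate_succ, Function.iterate_zero, Function.comp, id]
    rw [Dop_T h 1 1, Dop_T h 0 0, cE_T]; norm_num
  have d1 : ∀ c, bg (1 / 2) 1 (T j m 1 1 (k + 1) c)
      = T j m 0 0 (k + 1) (gScal n (1 / 2) 1 (0 + (k + 1)) * c) := by
    intro c
    simp only [bg, Function.iterate_one]
    rw [Dop_T h 0 0, cE_T]; norm_num
  have d2 : bg (1 / 2) 2 (T j m 2 2 (k + 1) 1)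
      = T j m 0 0 (k + 1) (gScal n (1 / 2) 2 (0 + (k + 1)) * 4) := by
    simp only [bg, Function.iterate_succ, Function.iterate_zero, Function.comp, id]
    rw [Dop_T h 1 1, Dop_T h 0 0, cE_T]; norm_num
  have e1 : bg (1 / 2) 1 (0 : PolA n) = 0 := by simp [bg, Dop_zero, cE_zero]
  simp only [LO.C, Finset.sum_range_succ, Finset.sum_range_zero]
  norm_num only [if_true, if_false, zero_add, add_zero]
  simp only [if_true, if_false, zero_add, add_zero, b1, b2, c1, c2, bh_zero, bg_zero, Nop_zero,
    Nop_one, Nop_two, zero_mul, pderiv_T m h, X_mul_T, d1, d2, e1, T_add]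
  have e2 : Nop 1 0 (T j m 2 2 k 1) = 0 := by simp [Nop]
  rw [e2, add_zero, add_comm 1 k]
  congr 1
  ring

end LO

theorem stmt_16 (n : ℕ) (hn : 2 ≤ n) (m : Fin n) :
    (¬ ∃ B ∈ LO.Weyl n, LO.Lop n m = LO.E'lin n ∘ₗ B) ∧
    (¬ ∃ B ∈ LO.Weyl n, LO.Lop n m = (LO.E'lin n + 1) ∘ₗ B) ∧
    (¬ ∃ B ∈ LO.Weyl n, ∀ ψ : PolA n, LO.C n (1 / 2) 2 (X (Sum.inr m)) ψ = B ψ) := by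
  have : Nontrivial (Fin n) := Fin.nontrivial_iff_two_le.mpr hn
  obtain ⟨j, hj⟩ := exists_ne m
  refine ⟨?_, ?_, ?_⟩
  · rintro ⟨B, hB, e⟩
    obtain ⟨q, hq⟩ := LO.weyl_coeff j m hB
    refine LO.no_poly q (Polynomial.X + Polynomial.C (1 + n / 2 : ℂ)) (-(1 + n / 2)) (-(1 / 4))
      (by simp) (by norm_num) fun k => ?_
    have := congrArg (fun f : Module.End ℂ (PolA n) =>
      coeff (Finsupp.single (Sum.inr m) (k + 1)) (f (LO.T j m 2 2 k 1))) e
    simp only [LO.Lop_T hj.symm, LO.coeff_T, LinearMap.comp_apply, LO.coeff_E', hq] at this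
    rw [this]
    simp only [Polynomial.eval_add, Polynomial.eval_X, Polynomial.eval_C]
    push_cast
    ring
  · rintro ⟨B, hB, e⟩
    obtain ⟨q, hq⟩ := LO.weyl_coeff j m hB
    refine LO.no_poly q (Polynomial.X + Polynomial.C (2 + n / 2 : ℂ)) (-(2 + n / 2)) (-(1 / 4))
      (by simp) (by norm_num) fun k => ?_
    have := congrArg (fun f : Module.End ℂ (PolA n) =>
      coeff (Finsupp.single (Sum.inr m) (k + 1)) (f (LO.T j m 2 2 k 1))) e
    simp only [LO.Lop_T hj.symm, LO.coeff_T, LinearMap.comp_apply, LinearMap.add_apply,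
      Module.End.one_apply, coeff_add, LO.coeff_E', hq] at this
    rw [this]
    simp only [Polynomial.eval_add, Polynomial.eval_X, Polynomial.eval_C]
    push_cast
    ring
  · rintro ⟨B, hB, e⟩
    obtain ⟨q, hq⟩ := LO.weyl_coeff j m hB
    refine LO.no_poly q ((Polynomial.X + Polynomial.C (1 + n / 2 : ℂ)) *
      (Polynomial.X + Polynomial.C (2 + n / 2 : ℂ))) (-(1 + n / 2)) (-(1 / 4))
      (by simp) (by norm_num) fun k => ?_
    rw [← hq, ← e, LO.C_T hj.symm, LO.coeff_T]
    have h2 : (2 * (k : ℂ) + n + 2) ≠ 0 := by exact_mod_cast Nat.succ_ne_zero (2 * k + n + 1)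
    have h3 : (2 * (k : ℂ) + n + 3) ≠ 0 := by exact_mod_cast Nat.succ_ne_zero (2 * k + n + 2)
    have h4 : (2 * (k : ℂ) + n + 4) ≠ 0 := by exact_mod_cast Nat.succ_ne_zero (2 * k + n + 3)
    obtain ⟨y, hy⟩ : ∃ y : ℂ, y = 2 * k + n := ⟨_, rfl⟩
    have hny : (n : ℂ) = y - 2 * k := by rw [hy]; ring
    rw [← hy] at h2 h3 h4
    have hh2 : LO.hScal n (1 / 2) 2 k = (y + 1) / (8 * (y + 2)) := by
      simp [LO.hScal, Finset.prod_range_succ]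
      rw [hny, show 2 * (k : ℂ) + (y - 2 * k) + 2 = y + 2 by ring,
        show 2 * (k : ℂ) + 1 + (y - 2 * k) + 2 = y + 3 by ring]
      field_simp
      ring
    have hh1 : LO.hScal n (1 / 2) 1 (k + 1) = 1 / 2 := by
      simp [LO.hScal]
      rw [hny, show 2 * ((k : ℂ) + 1) + (y - 2 * k) + 1 = y + 3 by ring]
      field_simp
      ring
    have hg1 : LO.gScal n (1 / 2) 1 (k + 1) = -(1 / 2) := by
      simp [LO.gScal]
      rw [hny, show 2 * ((k : ℂ) + 1) + (y - 2 * k) + 1 = y + 3 by ring]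
      field_simp
      ring
    have hg2 : LO.gScal n (1 / 2) 2 (k + 1) = (y + 5) / (8 * (y + 4)) := by
      simp [LO.gScal, Finset.prod_range_succ]
      rw [hny, show 2 * ((k : ℂ) + 1) + (y - 2 * k) + 1 = y + 3 by ring,
        show 2 * ((k : ℂ) + 1) + 1 + (y - 2 * k) + 1 = y + 4 by ring]
      field_simp
      ring
    rw [hh2, hh1, hg1, hg2]
    simp only [Polynomial.eval_mul, Polynomial.eval_add, Polynomial.eval_X, Polynomial.eval_C]
    rw [hny]
    field_simp
    ring
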